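/- Existence of congruence-class views (Lemma 'ssd-view-existence-cc'): Let A be an NFA over β with finitely many states and let L_s be a language over α ⊕ β. If there exist views V : α → Language β capturing ⟨L_s, L(A)⟩, then there exist views V' capturing ⟨L_s, L(A)⟩ such that for every a ∈ α, either V'(a) = ∅ or V'(a) = [w]_A (a congruence class of A) for some word w over β. -/

import Mathlib

/-!
Pick a word `w` in every nonempty view `V a` and let `V' a` be its congruence class; empty views
stay empty. Words with equal transition relations form a congruence for concatenation, so every
word of `s[V']` is congruent to a word of `s[V]` (`exists_rel_mem_subst`, with `transRel_append`),
and congruent words are both accepted or both rejected (`mem_accepts_of_transRel_eq`). Hence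
`L_s[V'] ⊆ L(A)`. Since `V' a` is nonempty whenever `V a` is, `L_s[V']` is nonempty, which is
`exists_rel_mem_subst` again, for the trivial relation.
-/

/-- Substituted letter: a source letter is replaced by its view, a target letter by itself. -/
def viewHat {α β : Type*} (V : α → Language β) : α ⊕ β → Language β
  | Sum.inl a => V a
  | Sum.inr b => {[b]}

/-- Substitution `s[V]` of views into a word over the combined alphabet. -/
def subst {α β : Type*} (V : α → Language β) (s : List (α ⊕ β)) : Language β :=
  (s.map (viewHat V)).prod

/-- Substitution `L_s[V]` of views into a source language. -/
def langSubst {α β : Type*} (V : α → Language β) (Ls : Language (α ⊕ β)) : Language β :=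
  ⋃ s ∈ Ls, subst V s

/-- Views `V` capture the mapping `⟨L_s, L_t⟩`. -/
def Captures {α β : Type*} (V : α → Language β) (Ls : Language (α ⊕ β))
    (Lt : Language β) : Prop :=
  langSubst V Ls ≤ Lt ∧ langSubst V Ls ≠ 0

/-- The transition relation of the word `w` on the NFA `A`. -/
def transRel {β σ : Type*} (A : NFA β σ) (w : List β) : Set (σ × σ) :=
  {pq | pq.2 ∈ A.evalFrom {pq.1} w}

/-- The congruence class of the word `w` for the NFA `A`. -/
def congClass {β σ : Type*} (A : NFA β σ) (w : List β) : Language β :=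
  {w' | transRel A w' = transRel A w}

/-- If every word of `V a` is related to a word of `W a` by a reflexive relation compatible with
concatenation, then every word of `s[V]` is related to a word of `s[W]`. -/
theorem exists_rel_mem_subst {α β : Type*} {V W : α → Language β} (R : List β → List β → Prop)
    (hrefl : ∀ u, R u u) (happ : ∀ u u' v v', R u u' → R v v' → R (u ++ v) (u' ++ v'))
    (h : ∀ a, ∀ u ∈ V a, ∃ u' ∈ W a, R u u') (s : List (α ⊕ β)) :
    ∀ u ∈ subst V s, ∃ u' ∈ subst W s, R u u' := by
  induction s with
  | nil => exact fun u hu => ⟨u, hu, hrefl u⟩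
  | cons c s ih =>
    intro u hu
    simp only [subst, List.map_cons, List.prod_cons] at hu ⊢
    obtain ⟨x, hx, y, hy, rfl⟩ := Language.mem_mul.1 hu
    obtain ⟨y', hy', hyy'⟩ := ih y hy
    have hc : ∃ x' ∈ viewHat W c, R x x' := by
      cases c with
      | inl a => exact h a x hx
      | inr b => exact ⟨x, hx, hrefl x⟩
    obtain ⟨x', hx', hxx'⟩ := hc
    exact ⟨x' ++ y', Language.mem_mul.2 ⟨x', hx', y', hy', rfl⟩, happ _ _ _ _ hxx' hyy'⟩

/-- The transition relation of a word determines its action on every set of states. -/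
theorem transRel_eq_iff {β σ : Type*} (A : NFA β σ) (u v : List β) :
    transRel A u = transRel A v ↔ ∀ S, A.evalFrom S u = A.evalFrom S v := by
  constructor
  · intro h S
    ext q
    rw [NFA.mem_evalFrom_iff_exists, NFA.mem_evalFrom_iff_exists (x := v)]
    exact exists_congr fun p => and_congr_right fun _ => Set.ext_iff.1 h (p, q)
  · intro h
    ext ⟨p, q⟩
    simp only [transRel, Set.mem_ofPred_eq, h]

theorem transRel_append {β σ : Type*} (A : NFA β σ) (u u' v v' : List β)
    (hu : transRel A u = transRel A u') (hv : transRel A v = transRel A v') :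
    transRel A (u ++ v) = transRel A (u' ++ v') := by
  rw [transRel_eq_iff] at *
  intro S
  rw [NFA.evalFrom_append, NFA.evalFrom_append, hu, hv]

theorem mem_accepts_of_transRel_eq {β σ : Type*} (A : NFA β σ) {u v : List β}
    (h : transRel A u = transRel A v) (hv : v ∈ A.accepts) : u ∈ A.accepts := by
  rw [NFA.mem_accepts] at *
  rwa [(transRel_eq_iff A u v).1 h]

theorem mem_langSubst {α β : Type*} {V : α → Language β} {Ls : Language (α ⊕ β)} {u : List β} :
    u ∈ langSubst V Ls ↔ ∃ s ∈ Ls, u ∈ subst V s :=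
  Set.mem_iUnion₂.trans (by simp only [exists_prop]; rfl)

/-- Lemma "ssd-view-existence-cc": if some views capture `⟨L_s, L(A)⟩` for an NFA `A`
with finitely many states, then some views each of which is either empty or a congruence
class for `A` capture `⟨L_s, L(A)⟩`. -/
theorem ssd_view_existence_cc {α β σ : Type*} [Fintype σ] (A : NFA β σ)
    (Ls : Language (α ⊕ β))
    (h : ∃ V : α → Language β, Captures V Ls A.accepts) :
    ∃ V' : α → Language β, Captures V' Ls A.accepts ∧
      ∀ a : α, V' a = 0 ∨ ∃ w : List β, V' a = congClass A w := by
  classical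
  obtain ⟨V, hsub, hne⟩ := h
  let V' : α → Language β := fun a =>
    if h : ∃ w, w ∈ V a then congClass A h.choose else 0
  have hpos : ∀ a (h : ∃ w, w ∈ V a), V' a = congClass A h.choose := fun a h => dif_pos h
  have hneg : ∀ a, (¬ ∃ w, w ∈ V a) → V' a = 0 := fun a h => dif_neg h
  have hback : ∀ a, ∀ u ∈ V' a, ∃ u' ∈ V a, transRel A u = transRel A u' := by
    intro a u hu
    by_cases h : ∃ w, w ∈ V a
    · rw [hpos a h] at hu
      exact ⟨h.choose, h.choose_spec, hu⟩
    · rw [hneg a h] at hu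
      exact absurd hu (Language.notMem_zero u)
  have hforth : ∀ a, ∀ u ∈ V a, ∃ u' ∈ V' a, True := by
    intro a u hu
    have h : ∃ w, w ∈ V a := ⟨u, hu⟩
    refine ⟨h.choose, ?_, trivial⟩
    rw [hpos a h]
    exact rfl
  refine ⟨V', ⟨?_, ?_⟩, ?_⟩
  · intro u hu
    obtain ⟨s, hs, hus⟩ := mem_langSubst.1 hu
    obtain ⟨u', hu', heq⟩ := exists_rel_mem_subst (fun u v => transRel A u = transRel A v)
      (fun _ => rfl) (transRel_append A) hback s u hus
    exact mem_accepts_of_transRel_eq A heq (hsub (mem_langSubst.2 ⟨s, hs, hu'⟩))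
  · obtain ⟨u, hu⟩ := Set.nonempty_iff_ne_empty.2 hne
    obtain ⟨s, hs, hus⟩ := mem_langSubst.1 hu
    obtain ⟨u', hu', -⟩ := exists_rel_mem_subst (fun _ _ => True)
      (fun _ => trivial) (fun _ _ _ _ _ _ => trivial) hforth s u hus
    intro h0
    have hmem := mem_langSubst.2 ⟨s, hs, hu'⟩
    rw [h0] at hmem
    exact Language.notMem_zero u' hmem
  · intro a
    by_cases h : ∃ w, w ∈ V a
    · exact Or.inr ⟨_, hpos a h⟩
    · exact Or.inl (hneg a h)
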